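/- The set {L(n) : n ∈ ℤ} ∪ {id_S} is ℂ-linearly independent in End_ℂ(S); its ℂ-linear span 𝔳 is a Lie subalgebra of End_ℂ(S) (under commutator); and the ℂ-linear map π : 𝔳 → End_ℂ(ℂ[t,t⁻¹]) determined by π(L(n)) = −M_{tⁿ}∘D and π(id_S) = 0 is a Lie algebra homomorphism whose kernel is ℂ·id_S and whose image is the ℂ-linear span of {M_{tⁿ}∘D : n ∈ ℤ}. (Thus 𝔳 is a one-dimensional central extension of the Lie algebra of vector fields on the circle.) -/

import Mathlib

/-!
A polynomial is killed by `h(j)` for large `j`, so the sum defining `L(n) p` is finite and the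
Heisenberg relations `[h(i), h(j)] = i δ_{i+j,0}` give `[h(k), L(n)] = k h(n+k)`. By the Jacobi
identity `[L(m), L(n)] - (m-n) L(m+n)` then commutes with every `h(k)`, hence is a scalar: `S` is
irreducible over the Heisenberg algebra. These are the Virasoro relations up to the value
`(m³-m)/12 δ_{m+n,0}` of the central term, which is irrelevant because `π` kills the identity.

The double commutator `[h(l), [h(k), L(n)]]` is the scalar `k l` if `n = -(k+l)` and `0` otherwise,
and it vanishes on the identity, so it separates the coefficients of a linear relation. The map `π`
is defined on the resulting basis; it respects brackets because the `-tⁿ D` satisfy the Virasoro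
relations without central term, and its kernel is the scalars because `tⁿ D (t) = tⁿ⁺¹`.
-/

noncomputable section

/-- The polynomial algebra `S = ℂ[a₁,a₂,a₃,…]`, with variables indexed by `ℕ+`. -/
abbrev SS : Type := MvPolynomial ℕ+ ℂ

/-- The Heisenberg operators `h(n)` on `S`: for `n < 0`, multiplication by `a₋ₙ`;
for `n > 0`, `n·∂/∂aₙ`; and `h(0) = 0`. -/
noncomputable def hOp (n : ℤ) : Module.End ℂ SS :=
  if _h1 : 0 < n then
    (n : ℂ) • (MvPolynomial.pderiv (R := ℂ) (⟨n.toNat, by omega⟩ : ℕ+)).toLinearMap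
  else if _h2 : n < 0 then
    LinearMap.mulLeft ℂ (MvPolynomial.X (⟨(-n).toNat, by omega⟩ : ℕ+))
  else 0

/-- The normally ordered product `:h(i)h(j):`  (equal to `h(i)∘h(j)` if `i ≤ j`,
and to `h(j)∘h(i)` if `i > j`; note `f * g` is composition in `Module.End`). -/
noncomputable def nord (i j : ℤ) : Module.End ℂ SS :=
  if i ≤ j then hOp i * hOp j else hOp j * hOp i

open Submodule Set Finsupp Filter

attribute [local instance] LieRing.ofAssociativeRing

/-! ### Linear maps on the span of an independent family -/

section SpanLift

variable {R M N ι : Type*} [Semiring R] [AddCommMonoid M] [Module R M]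
  [AddCommMonoid N] [Module R N]

lemma linearCombination_prodMk (v : ι → M) (w : ι → N) (a : ι →₀ R) :
    linearCombination R (fun i => (v i, w i)) a
      = (linearCombination R v a, linearCombination R w a) := by
  simp [linearCombination_apply, Finsupp.sum, Prod.ext_iff, Prod.fst_sum, Prod.snd_sum]

/-- The linear map on the span of a linearly independent family `v` that sends `v i` to `w i`. -/
def spanLift {v : ι → M} (hv : LinearIndependent R v) (w : ι → N) : span R (range v) →ₗ[R] N :=
  linearCombination R w ∘ₗ hv.repr

variable {v : ι → M} (hv : LinearIndependent R v) (w : ι → N)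

lemma spanLift_apply_of_eq {x : span R (range v)} {i : ι} (hx : (x : M) = v i) :
    spanLift hv w x = w i := by
  simp [spanLift, hv.repr_eq_single i x hx]

lemma range_spanLift : LinearMap.range (spanLift hv w) = span R (range w) := by
  rw [spanLift, LinearMap.range_comp, hv.repr_range, Submodule.map_top, range_linearCombination]

lemma spanLift_elim_eq_zero_iff {v : Option ι → M} (hv : LinearIndependent R v) {w : ι → N}
    (hw : LinearIndependent R w) (x : span R (range v)) :
    spanLift hv (fun o => o.elim 0 w) x = 0 ↔ ∃ c : R, (x : M) = c • v none := by
  constructor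
  · intro hx
    have hsome : (hv.repr x).some = 0 := by
      refine hw ?_
      simpa [spanLift, linearCombination_option, Function.comp_def] using hx
    refine ⟨hv.repr x none, ?_⟩
    rw [← hv.linearCombination_repr x, linearCombination_option, hsome, map_zero, add_zero]
  · rintro ⟨c, hc⟩
    have hrepr : hv.repr x = single none c := hv.repr_eq (by simp [hc])
    simp [spanLift, hrepr]

end SpanLift

/-! ### Brackets on the span of a family -/

section LieSpan

variable {R 𝔤 𝔥 ι : Type*} [CommRing R] [LieRing 𝔤] [LieAlgebra R 𝔤] [LieRing 𝔥] [LieAlgebra R 𝔥]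

lemma lie_mem_span_of_lie_mem {s : Set 𝔤} (hs : ∀ x ∈ s, ∀ y ∈ s, ⁅x, y⁆ ∈ span R s)
    {x y : 𝔤} (hx : x ∈ span R s) (hy : y ∈ span R s) : ⁅x, y⁆ ∈ span R s := by
  have hle : map₂ (LieModule.toEnd R 𝔤 𝔤 : 𝔤 →ₗ[R] Module.End R 𝔤) (span R s) (span R s)
      ≤ span R s := by
    rw [map₂_span_span, span_le]
    rintro _ ⟨x, hx, y, hy, rfl⟩
    exact hs x hx y hy
  exact hle (apply_mem_map₂ _ hx hy)

-- The hypothesis says that the span of the pairs `(v i, w i)` is a Lie subalgebra of `𝔤 × 𝔥`.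
lemma exists_lie_linearCombination {v : ι → 𝔤} {w : ι → 𝔥}
    (h : ∀ i j, ∃ c : ι →₀ R, ⁅v i, v j⁆ = linearCombination R v c ∧
      ⁅w i, w j⁆ = linearCombination R w c) (a b : ι →₀ R) :
    ∃ c : ι →₀ R,
      ⁅linearCombination R v a, linearCombination R v b⁆ = linearCombination R v c ∧
      ⁅linearCombination R w a, linearCombination R w b⁆ = linearCombination R w c := by
  let vw : ι → 𝔤 × 𝔥 := fun i => (v i, w i)
  have hmem : ∀ c, linearCombination R vw c ∈ span R (range vw) := fun c => by
    simp [← range_linearCombination]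
  have hclosed : ∀ x ∈ range vw, ∀ y ∈ range vw, ⁅x, y⁆ ∈ span R (range vw) := by
    rintro _ ⟨i, rfl⟩ _ ⟨j, rfl⟩
    obtain ⟨c, hv, hw⟩ := h i j
    have hc := hmem c
    rwa [linearCombination_prodMk, ← hv, ← hw] at hc
  have hab := lie_mem_span_of_lie_mem hclosed (hmem a) (hmem b)
  rw [← range_linearCombination] at hab
  obtain ⟨c, hc⟩ := hab
  simp only [vw, linearCombination_prodMk, LieAlgebra.Prod.bracket_apply, Prod.mk.injEq] at hc
  exact ⟨c, hc.1.symm, hc.2.symm⟩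

lemma spanLift_lie {v : ι → 𝔤} (hv : LinearIndependent R v) {w : ι → 𝔥}
    (h : ∀ i j, ∃ c : ι →₀ R, ⁅v i, v j⁆ = linearCombination R v c ∧
      ⁅w i, w j⁆ = linearCombination R w c)
    {x y z : span R (range v)} (hz : (z : 𝔤) = ⁅(x : 𝔤), (y : 𝔤)⁆) :
    spanLift hv w z = ⁅spanLift hv w x, spanLift hv w y⁆ := by
  obtain ⟨c, hvc, hwc⟩ := exists_lie_linearCombination h (hv.repr x) (hv.repr y)
  rw [hv.linearCombination_repr, hv.linearCombination_repr, ← hz] at hvc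
  simp only [spanLift, LinearMap.comp_apply, hv.repr_eq hvc.symm, hwc]

end LieSpan

/-! ### Virasoro elements in a Lie algebra containing the Heisenberg relations -/

section Heisenberg

variable {R 𝔤 : Type*} [CommRing R] [LieRing 𝔤] [LieAlgebra R 𝔤] {h : ℤ → 𝔤}

lemma lie_lie_sub_smul_eq_zero {L : ℤ → 𝔤} (hL : ∀ k n : ℤ, ⁅h k, L n⁆ = (k : R) • h (n + k))
    (k m n : ℤ) : ⁅h k, ⁅L m, L n⁆ - ((m : R) - n) • L (m + n)⁆ = 0 := by
  rw [lie_sub, lie_smul, leibniz_lie, hL, hL, hL, smul_lie, lie_smul, hL,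
    ← lie_skew (L m) (h (n + k)), hL, ← add_assoc n m k, add_comm n m, ← add_assoc m n k]
  push_cast
  module

variable {f : Option ℤ → 𝔤} (hf : ∀ k n : ℤ, ⁅h k, f (some n)⁆ = (k : R) • h (n + k))
  (hcentral : ∀ k, ⁅h k, f none⁆ = 0)
  (hh : ∀ i j : ℤ, ⁅h i, h j⁆ = (if i + j = 0 then (i : R) else 0) • f none)

include hf hcentral hh

lemma lie_lie_linearCombination (a : Option ℤ →₀ R) (k l : ℤ) :
    ⁅h l, ⁅h k, linearCombination R f a⁆⁆ = ((k : R) * l * a (some (-(k + l)))) • f none := by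
  induction a using Finsupp.induction_linear with
  | zero => simp
  | add a b ha hb => simp [ha, hb, mul_add, add_smul]
  | single o c =>
    obtain _ | n := o
    · simp [hcentral]
    · have hn : l + (n + k) = 0 ↔ n = -(k + l) := by omega
      simp only [linearCombination_single, lie_smul, hf, hh, hn, smul_smul, single_apply,
        Option.some.injEq]
      split_ifs
      · congr 1
        ring
      · simp

lemma linearIndependent_of_lie_heisenberg [IsDomain R] [CharZero R]
    (hne : ∀ c : R, c • f none = 0 → c = 0) : LinearIndependent R f := by
  refine linearIndependent_iff.2 fun a ha => ?_
  have hsome : ∀ n, a (some n) = 0 := fun n => by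
    obtain ⟨k, hk, hnk⟩ : ∃ k : ℤ, k ≠ 0 ∧ n + k ≠ 0 := ⟨|n| + 1, by grind, by grind⟩
    have hcoeff := lie_lie_linearCombination hf hcentral hh a k (-(n + k))
    rw [ha, lie_zero, lie_zero, show -(k + -(n + k)) = n by ring] at hcoeff
    have hprod := hne _ hcoeff.symm
    refine (mul_eq_zero.1 hprod).resolve_left (mul_ne_zero ?_ ?_)
    · exact_mod_cast hk
    · exact_mod_cast neg_ne_zero.2 hnk
  have hsingle : a = single none (a none) := by
    ext (_ | n) <;> simp [hsome]
  have hnone : a none = 0 := hne _ (by rwa [hsingle, linearCombination_single] at ha)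
  rw [hsingle, hnone, single_zero]

end Heisenberg

/-! ### Polynomial differential operators -/

section MvPolynomial

open MvPolynomial

variable {R σ : Type*} [CommRing R]

lemma lie_pderiv_pderiv (i j : σ) : ⁅pderiv (R := R) i, pderiv (R := R) j⁆ = 0 := by
  classical
  refine derivation_ext fun k => ?_
  simp [Derivation.commutator_apply, pderiv_X, Pi.single_apply, apply_ite]

lemma eq_C_of_pderiv_eq_zero [IsAddTorsionFree R] {p : MvPolynomial σ R}
    (hp : ∀ i, pderiv i p = 0) : p = C (constantCoeff p) := by
  apply MvPolynomial.coe_injective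
  refine MvPowerSeries.pderiv.ext (fun i => ?_) ?_
  · simp [MvPowerSeries.pderiv_coe, hp]
  · rw [← MvPowerSeries.coeff_zero_eq_constantCoeff_apply, coeff_coe, ← constantCoeff_eq]
    simp

-- Commuting with the variables makes `T` multiplication by `T 1`, and commuting with the
-- derivations makes `T 1` a constant.
lemma exists_eq_smul_one_of_commute [IsAddTorsionFree R] {T : Module.End R (MvPolynomial σ R)}
    (hX : ∀ i p, T (X i * p) = X i * T p) (hd : ∀ i p, T (pderiv i p) = pderiv i (T p)) :
    ∃ c : R, T = c • (1 : Module.End R (MvPolynomial σ R)) := by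
  have hmul : ∀ p, T p = p * T 1 := fun p => by
    induction p using MvPolynomial.induction_on with
    | C a => rw [← mul_one (C a), ← smul_eq_C_mul, map_smul, smul_mul_assoc, one_mul]
    | add p q hp hq => rw [map_add, hp, hq, add_mul]
    | mul_X p i hp => rw [mul_comm p, hX, hp, mul_assoc]
  have hconst : T 1 = C (constantCoeff (T 1)) :=
    eq_C_of_pderiv_eq_zero fun i => by rw [← hd, pderiv_one, map_zero]
  refine ⟨constantCoeff (T 1), LinearMap.ext fun p => ?_⟩
  rw [hmul, hconst, mul_comm, ← smul_eq_C_mul]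
  simp

end MvPolynomial

/-! ### The Heisenberg operators -/

section HeisenbergOperators

open MvPolynomial

lemma hOp_coe (n : ℕ+) : hOp n = (n : ℂ) • (pderiv (R := ℂ) n).toLinearMap :=
  (dif_pos (Int.natCast_pos.2 n.pos)).trans (by simp; rfl)

lemma hOp_neg_coe (n : ℕ+) : hOp (-n) = LinearMap.mulLeft ℂ (X n) := by
  have hn := Int.natCast_pos.2 n.pos
  refine (dif_neg (by omega)).trans ((dif_pos (by omega)).trans ?_)
  congr
  simp only [neg_neg]
  rfl

lemma hOp_zero : hOp 0 = 0 := by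
  simp [hOp]

lemma eq_zero_or_exists_pnat (i : ℤ) : i = 0 ∨ (∃ n : ℕ+, i = n) ∨ ∃ n : ℕ+, i = -n := by
  obtain hi | rfl | hi := lt_trichotomy i 0
  · lift -i to ℕ+ using neg_pos.2 hi with n hn
    exact .inr (.inr ⟨n, by rw [hn, neg_neg]⟩)
  · exact .inl rfl
  · lift i to ℕ+ using hi
    exact .inr (.inl ⟨i, rfl⟩)

lemma lie_hOp_coe_hOp_coe (m n : ℕ+) : ⁅hOp m, hOp n⁆ = 0 := by
  refine LinearMap.ext fun p => ?_
  have hcomm := DFunLike.congr_fun (lie_pderiv_pderiv (R := ℂ) m n) p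
  simp only [Derivation.commutator_apply, Derivation.zero_apply, sub_eq_zero] at hcomm
  simp [Ring.lie_def, hOp_coe, hcomm, smul_comm (n : ℂ)]

lemma lie_hOp_neg_coe_hOp_neg_coe (m n : ℕ+) : ⁅hOp (-m), hOp (-n)⁆ = 0 := by
  refine LinearMap.ext fun p => ?_
  simp [Ring.lie_def, hOp_neg_coe, mul_left_comm]

lemma lie_hOp_coe_hOp_neg_coe (m n : ℕ+) :
    ⁅hOp m, hOp (-n)⁆ = (if m = n then (m : ℂ) else 0) • (1 : Module.End ℂ SS) := by
  refine LinearMap.ext fun p => ?_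
  obtain rfl | hmn := eq_or_ne m n
  · simp [Ring.lie_def, hOp_coe, hOp_neg_coe, smul_add]
  · simp [Ring.lie_def, hOp_coe, hOp_neg_coe, pderiv_X_of_ne hmn.symm, hmn]

lemma lie_hOp_hOp (i j : ℤ) :
    ⁅hOp i, hOp j⁆ = (if i + j = 0 then (i : ℂ) else 0) • (1 : Module.End ℂ SS) := by
  obtain rfl | ⟨m, rfl⟩ | ⟨m, rfl⟩ := eq_zero_or_exists_pnat i
  · simp [hOp_zero]
  · obtain rfl | ⟨n, rfl⟩ | ⟨n, rfl⟩ := eq_zero_or_exists_pnat j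
    · simp [hOp_zero]
    · rw [lie_hOp_coe_hOp_coe, if_neg (by positivity), zero_smul]
    · simp [lie_hOp_coe_hOp_neg_coe, add_neg_eq_zero]
  · obtain rfl | ⟨n, rfl⟩ | ⟨n, rfl⟩ := eq_zero_or_exists_pnat j
    · simp [hOp_zero]
    · rw [← lie_skew, lie_hOp_coe_hOp_neg_coe]
      obtain rfl | hmn := eq_or_ne n m
      · simp only [neg_add_cancel, if_true, Int.cast_neg, Int.cast_natCast]
        exact (neg_smul (n : ℂ) (1 : Module.End ℂ SS)).symm
      · simp [hmn, hmn.symm, neg_add_eq_zero]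
    · have hmn : -(m : ℤ) + -n ≠ 0 := by rw [← neg_add]; exact neg_ne_zero.2 (by positivity)
      rw [lie_hOp_neg_coe_hOp_neg_coe, if_neg hmn, zero_smul]

lemma eventually_hOp_apply_eq_zero (p : SS) : ∀ᶠ j in atTop, hOp j p = 0 := by
  obtain ⟨N, hN⟩ := (p.vars.image fun n : ℕ+ => (n : ℤ)).bddAbove
  filter_upwards [eventually_gt_atTop N, eventually_gt_atTop 0] with j hjN hj
  lift j to ℕ+ using hj
  have hvars : j ∉ p.vars := fun hmem =>
    hjN.not_ge (hN (Finset.mem_coe.2 (Finset.mem_image_of_mem _ hmem)))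
  simp [hOp_coe, pderiv_eq_zero_of_notMem_vars hvars]

-- Schur's lemma for the irreducible Fock space `S`.
lemma exists_eq_smul_one_of_lie_hOp_eq_zero {T : Module.End ℂ SS} (hT : ∀ k, ⁅hOp k, T⁆ = 0) :
    ∃ c : ℂ, T = c • (1 : Module.End ℂ SS) := by
  have hcomm : ∀ k p, T (hOp k p) = hOp k (T p) := fun k p =>
    (sub_eq_zero.1 (LinearMap.congr_fun (hT k) p)).symm
  refine exists_eq_smul_one_of_commute (fun n p => ?_) (fun n p => ?_)
  · simpa [hOp_neg_coe] using hcomm (-n) p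
  · simpa [hOp_coe] using hcomm n p

end HeisenbergOperators

/-! ### The Virasoro operators -/

section VirasoroOperators

lemma nord_eq_mul (i j : ℤ) : nord i j = hOp (min i j) * hOp (max i j) := by
  obtain hij | hij := le_or_gt i j
  · rw [nord, if_pos hij, min_eq_left hij, max_eq_right hij]
  · rw [nord, if_neg hij.not_ge, min_eq_right hij.le, max_eq_left hij.le]

lemma lie_hOp_nord (k i j : ℤ) :
    ⁅hOp k, nord i j⁆ = (if k + i = 0 then (k : ℂ) else 0) • hOp j
      + (if k + j = 0 then (k : ℂ) else 0) • hOp i := by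
  have lie_mul : ∀ a b : ℤ, ⁅hOp k, hOp a * hOp b⁆ = (if k + a = 0 then (k : ℂ) else 0) • hOp b
      + (if k + b = 0 then (k : ℂ) else 0) • hOp a := fun a b => by
    have leibniz : ⁅hOp k, hOp a * hOp b⁆ = ⁅hOp k, hOp a⁆ * hOp b + hOp a * ⁅hOp k, hOp b⁆ := by
      simp only [Ring.lie_def, mul_sub, sub_mul, mul_assoc, sub_add_sub_cancel]
    rw [leibniz, lie_hOp_hOp, lie_hOp_hOp, smul_mul_assoc, one_mul, mul_smul_comm, mul_one]
  obtain hij | hij := le_or_gt i j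
  · rw [nord, if_pos hij, lie_mul]
  · rw [nord, if_neg hij.not_ge, lie_mul, add_comm]

lemma lie_hOp_nord_sub (k n j : ℤ) :
    ⁅hOp k, nord j (n - j)⁆
      = ((if j = -k then (k : ℂ) else 0) + if j = n + k then (k : ℂ) else 0) • hOp (n + k) := by
  have hleft : k + j = 0 ↔ j = -k := by omega
  have hright : k + (n - j) = 0 ↔ j = n + k := by omega
  simp only [lie_hOp_nord, add_smul, hleft, hright]
  congr 1
  · split_ifs with hj
    · rw [hj, sub_neg_eq_add]
    · simp
  · split_ifs with hj
    · rw [hj]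
    · simp

lemma hasFiniteSupport_nord_apply (n : ℤ) (p : SS) :
    Function.HasFiniteSupport fun j => nord j (n - j) p := by
  have htendsto : Tendsto (fun j : ℤ => max j (n - j)) cofinite atTop := by
    rw [Int.cofinite_eq]
    refine .sup (tendsto_atTop_mono (fun j => le_max_right j (n - j)) ?_)
      (tendsto_atTop_mono (fun j => le_max_left j (n - j)) tendsto_id)
    exact tendsto_atTop_add_const_left atBot n tendsto_neg_atBot_atTop
  have hzero : ∀ᶠ j in cofinite, nord j (n - j) p = 0 := by
    filter_upwards [htendsto.eventually (eventually_hOp_apply_eq_zero p)] with j hj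
    rw [nord_eq_mul, Module.End.mul_apply, hj, map_zero]
  exact hzero

variable {L : ℤ → Module.End ℂ SS}
  (hL : ∀ (n : ℤ) (p : SS), L n p = (1 / 2 : ℂ) • ∑ᶠ j : ℤ, nord j (n - j) p)

include hL

lemma lie_hOp_apply_eq_finsum (k n : ℤ) (p : SS) :
    ⁅hOp k, L n⁆ p = (1 / 2 : ℂ) • ∑ᶠ j : ℤ, ⁅hOp k, nord j (n - j)⁆ p := by
  have hfin := hasFiniteSupport_nord_apply n p
  have hfin_map : Function.HasFiniteSupport fun j => hOp k (nord j (n - j) p) :=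
    Function.HasFiniteSupport.fun_comp hfin (map_zero (hOp k))
  simp only [Ring.lie_def, LinearMap.sub_apply, Module.End.mul_apply, hL, map_smul]
  rw [map_finsum (hOp k) hfin, ← smul_sub,
    finsum_sub_distrib hfin_map (hasFiniteSupport_nord_apply n (hOp k p))]

lemma lie_hOp_L (k n : ℤ) : ⁅hOp k, L n⁆ = (k : ℂ) • hOp (n + k) := by
  refine LinearMap.ext fun p => ?_
  have hsum : ∑ᶠ j : ℤ, ((if j = -k then (k : ℂ) else 0) + if j = n + k then (k : ℂ) else 0)
      = 2 * k := by
    rw [finsum_eq_sum_of_support_subset (s := {-k, n + k}) _ (by intro j; simp; grind),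
      Finset.sum_add_distrib, Finset.sum_ite_eq', Finset.sum_ite_eq']
    simp [two_mul]
  simp only [lie_hOp_apply_eq_finsum hL, lie_hOp_nord_sub, LinearMap.smul_apply]
  rw [← finsum_smul, hsum, smul_smul, one_div, inv_mul_cancel_left₀ two_ne_zero]

lemma exists_lie_L_eq (m n : ℤ) :
    ∃ c : ℂ, ⁅L m, L n⁆ = ((m : ℂ) - n) • L (m + n) + c • (1 : Module.End ℂ SS) := by
  obtain ⟨c, hc⟩ := exists_eq_smul_one_of_lie_hOp_eq_zero fun k =>
    lie_lie_sub_smul_eq_zero (lie_hOp_L hL) k m n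
  exact ⟨c, by rw [← hc, add_sub_cancel]⟩

end VirasoroOperators

/-! ### Vector fields on the circle -/

section WittOperators

open LaurentPolynomial

variable {R : Type*} [CommRing R]

/-- The operator `-tⁿ D` on Laurent polynomials; when `D = t d/dt`, it is the vector field
`-tⁿ⁺¹ d/dt` on the circle. -/
def wittOp (D : Module.End R R[T;T⁻¹]) (n : ℤ) : Module.End R R[T;T⁻¹] :=
  -(LinearMap.mulLeft R (T n) * D)

lemma span_range_elim_wittOp (D : Module.End R R[T;T⁻¹]) :
    span R (range fun o : Option ℤ => o.elim 0 (wittOp D))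
      = span R {g | ∃ n : ℤ, g = LinearMap.mulLeft R (T n) * D} := by
  have hneg : range (wittOp D) = -{g | ∃ n : ℤ, g = LinearMap.mulLeft R (T n) * D} := by
    ext g
    simp [wittOp, eq_comm (b := g), neg_eq_iff_eq_neg]
  rw [Option.range_elim, span_insert_zero, hneg, span_neg]

variable {D : Module.End R R[T;T⁻¹]} (hD : ∀ k : ℤ, D (T k) = (k : R) • T k)

include hD

lemma wittOp_apply_T (n k : ℤ) : wittOp D n (T k) = -(k : R) • T (n + k) := by
  rw [wittOp, LinearMap.neg_apply, Module.End.mul_apply, hD, map_smul, LinearMap.mulLeft_apply,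
    ← T_add, neg_smul]

lemma lie_wittOp (m n : ℤ) : ⁅wittOp D m, wittOp D n⁆ = ((m : R) - n) • wittOp D (m + n) := by
  refine (AddMonoidAlgebra.basis ℤ R).ext fun k => ?_
  change ⁅wittOp D m, wittOp D n⁆ (T k) = (((m : R) - n) • wittOp D (m + n)) (T k)
  simp only [Ring.lie_def, LinearMap.sub_apply, Module.End.mul_apply, LinearMap.smul_apply,
    wittOp_apply_T hD, map_smul]
  rw [← add_assoc m n k, ← add_assoc n m k, add_comm n m]
  push_cast
  module

lemma linearIndependent_wittOp : LinearIndependent R (wittOp D) := by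
  have hT : LinearIndependent R fun n : ℤ => (T (n + 1) : R[T;T⁻¹]) :=
    (AddMonoidAlgebra.basis ℤ R).linearIndependent.comp _ (add_left_injective 1)
  let evalNeg : Module.End R R[T;T⁻¹] →ₗ[R] R[T;T⁻¹] := -LinearMap.applyₗ (T 1)
  refine .of_comp evalNeg ?_
  convert hT using 2 with n
  simp [evalNeg, wittOp_apply_T hD]

end WittOperators

section Extension

variable {L : ℤ → Module.End ℂ SS}
  (hL : ∀ (n : ℤ) (p : SS), L n p = (1 / 2 : ℂ) • ∑ᶠ j : ℤ, nord j (n - j) p)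
  {f : Option ℤ → Module.End ℂ SS} (hf0 : f none = 1) (hf : ∀ n : ℤ, f (some n) = L n)

include hL hf0 hf

lemma linearIndependent_option_L : LinearIndependent ℂ f := by
  refine linearIndependent_of_lie_heisenberg (h := hOp) (fun k n => ?_) (fun k => ?_)
    (fun i j => ?_) ?_
  · rw [hf, lie_hOp_L hL]
  · simp [hf0, Ring.lie_def]
  · rw [hf0, lie_hOp_hOp]
  · simp [hf0]

lemma exists_common_structureConstants {D : Module.End ℂ (LaurentPolynomial ℂ)}
    (hD : ∀ k : ℤ, D (LaurentPolynomial.T k) = (k : ℂ) • LaurentPolynomial.T k)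
    (o o' : Option ℤ) :
    ∃ c : Option ℤ →₀ ℂ, ⁅f o, f o'⁆ = linearCombination ℂ f c ∧
      ⁅o.elim 0 (wittOp D), o'.elim 0 (wittOp D)⁆
        = linearCombination ℂ (fun o : Option ℤ => o.elim 0 (wittOp D)) c := by
  obtain _ | m := o
  · exact ⟨0, by simp [hf0, Ring.lie_def]⟩
  obtain _ | n := o'
  · exact ⟨0, by simp [hf0, Ring.lie_def]⟩
  obtain ⟨c, hc⟩ := exists_lie_L_eq hL m n
  refine ⟨single (some (m + n)) ((m : ℂ) - n) + single none c, ?_, ?_⟩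
  · simp only [map_add, linearCombination_single, hf, hf0, hc]
  · simp only [map_add, linearCombination_single, Option.elim, lie_wittOp hD, smul_zero, add_zero]

end Extension

/-- The span `𝔳` of `{L(n)} ∪ {id_S}` is a Lie subalgebra of `End_ℂ(S)`, the family is
linearly independent, and `𝔳` is a one-dimensional central extension of the Lie algebra
of vector fields on the circle, via `π(L(n)) = −M_{tⁿ}∘D`, `π(id_S) = 0`. -/
theorem virasoro_is_central_extension_of_vector_fields
    (L : ℤ → Module.End ℂ SS)
    (hL : ∀ (n : ℤ) (p : SS), L n p = (1 / 2 : ℂ) • ∑ᶠ j : ℤ, nord j (n - j) p)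
    (Dop : Module.End ℂ (LaurentPolynomial ℂ))
    (hD : ∀ k : ℤ, Dop (LaurentPolynomial.T k) = (k : ℂ) • LaurentPolynomial.T k)
    (f : Option ℤ → Module.End ℂ SS)
    (hf0 : f none = 1) (hf : ∀ n : ℤ, f (some n) = L n) :
    LinearIndependent ℂ f ∧
    (∀ x ∈ Submodule.span ℂ (Set.range f), ∀ y ∈ Submodule.span ℂ (Set.range f),
        x * y - y * x ∈ Submodule.span ℂ (Set.range f)) ∧
    ∃ π : (Submodule.span ℂ (Set.range f)) →ₗ[ℂ] Module.End ℂ (LaurentPolynomial ℂ),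
      (∀ (n : ℤ) (hn : L n ∈ Submodule.span ℂ (Set.range f)),
          π ⟨L n, hn⟩ = -(LinearMap.mulLeft ℂ (LaurentPolynomial.T n) * Dop)) ∧
      (∀ h1 : (1 : Module.End ℂ SS) ∈ Submodule.span ℂ (Set.range f),
          π ⟨1, h1⟩ = 0) ∧
      (∀ (x y : Submodule.span ℂ (Set.range f))
          (hxy : ((x : Module.End ℂ SS) * y - (y : Module.End ℂ SS) * x)
              ∈ Submodule.span ℂ (Set.range f)),
          π ⟨(x : Module.End ℂ SS) * y - (y : Module.End ℂ SS) * x, hxy⟩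
            = π x * π y - π y * π x) ∧
      (∀ v : Submodule.span ℂ (Set.range f),
          π v = 0 ↔ ∃ c : ℂ, (v : Module.End ℂ SS) = c • (1 : Module.End ℂ SS)) ∧
      LinearMap.range π
        = Submodule.span ℂ
            {g | ∃ n : ℤ, g = LinearMap.mulLeft ℂ (LaurentPolynomial.T n) * Dop} := by
  have hli := linearIndependent_option_L hL hf0 hf
  have hbracket := exists_common_structureConstants hL hf0 hf hD
  refine ⟨hli, fun x hx y hy => lie_mem_span_of_lie_mem ?_ hx hy,
    spanLift hli fun o => o.elim 0 (wittOp Dop),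
    fun n _ => spanLift_apply_of_eq hli _ (i := some n) (hf n).symm,
    fun _ => spanLift_apply_of_eq hli _ (i := none) hf0.symm,
    fun x y _ => spanLift_lie hli hbracket rfl, fun v => ?_, ?_⟩
  · rintro _ ⟨o, rfl⟩ _ ⟨o', rfl⟩
    obtain ⟨c, hc, -⟩ := hbracket o o'
    simp [hc, ← range_linearCombination]
  · rw [spanLift_elim_eq_zero_iff hli (linearIndependent_wittOp hD), hf0]
  · rw [range_spanLift, span_range_elim_wittOp]
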